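/- (Lemma 4.1, probabilistic form.) For every c > 0 there exists a constant C such that the following holds for every integer n ≥ 2. Let H = (V, (e_i)_{i ∈ I}) be a hypergraph with all hyperedges nonempty and |V| + |I| ≤ n. Let T = ⌈C · log₂ n⌉ and let (X_u(i,j))_{u ∈ V, 0 ≤ i ≤ ⌊log₂ n⌋, 1 ≤ j ≤ T} be mutually independent Bernoulli random variables where X_u(i,j) has success probability 2^{-i}. Then with probability at least 1 − n^{-c}, for every hyperedge index ℓ ∈ I there exists a pair (i, j) with 0 ≤ i ≤ ⌊log₂ n⌋ and 1 ≤ j ≤ T such that exactly one vertex u ∈ e_ℓ satisfies X_u(i,j) = 1. Consequently, assigning to each hyperedge e_ℓ as its color the (lexicographically) first such pair (i,j), and to each vertex u the color set cs(u) = {(i,j) : X_u(i,j) = 1}, yields with probability at least 1 − n^{-c} a feasible HBD solution with palette size (⌊log₂ n⌋ + 1) · T = O(log² n): for every ℓ ∈ I there is exactly one vertex v ∈ e_ℓ whose color set contains the color of e_ℓ. -/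

import Mathlib

open MeasureTheory ProbabilityTheory

/-!
For a hyperedge with `d` vertices, the epoch `i = ⌊log₂ d⌋` suffices. There every vertex is selected
with probability `p = 2⁻ⁱ`, so `1 ≤ d p` and `d - 1 ≤ 2 (2ⁱ - 1)`, and a single iteration selects
exactly one vertex with probability `d p (1 - p) ^ (d - 1) ≥ ((1 - p) ^ (2ⁱ - 1)) ^ 2 ≥ e⁻²`.
The iterations of that epoch are independent, so all `T` of them fail with probability at most
`exp (-e⁻² T)`, which is at most `n ^ (-(c + 1))` once `T ≥ e² (c + 1) log n`. A union bound over
the at most `n` hyperedges concludes.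
-/

section Isolation

variable {ι Ω : Type*}

/-- The event that exactly one element of `S` is selected by the random indicators `Y`. When `Y` is
the row `v ↦ X (v, i, j)` and `S` is a hyperedge, this says that the pair `(i, j)` is a valid color
for `S`. -/
def isolationEvent (Y : ι → Ω → Bool) (S : Finset ι) : Set Ω :=
  {ω | ∃! v, v ∈ S ∧ Y v ω = true}

lemma isolationEvent_eq_biUnion [DecidableEq ι] (Y : ι → Ω → Bool) (S : Finset ι) :
    isolationEvent Y S = ⋃ v ∈ S, ⋂ w ∈ S, Y w ⁻¹' {decide (w = v)} := by
  ext ω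
  have hiff (v w : ι) : Y w ω = decide (w = v) ↔ (Y w ω = true ↔ w = v) := by
    rw [Bool.eq_iff_iff, decide_eq_true_iff]
  simp only [isolationEvent, Set.mem_ofPred_eq, Set.mem_iUnion, Set.mem_iInter,
    Set.mem_preimage, Set.mem_singleton_iff, hiff, exists_prop]
  constructor
  · rintro ⟨v, ⟨hv, hYv⟩, huniq⟩
    exact ⟨v, hv, fun w hw ↦ ⟨fun hYw ↦ huniq w ⟨hw, hYw⟩, fun hwv ↦ hwv ▸ hYv⟩⟩
  · rintro ⟨v, hv, hY⟩
    exact ⟨v, ⟨hv, (hY v hv).2 rfl⟩, fun w ⟨hw, hYw⟩ ↦ (hY w hw).1 hYw⟩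

lemma pairwiseDisjoint_biInter_preimage_decide_eq [DecidableEq ι] (Y : ι → Ω → Bool)
    (S : Finset ι) :
    (S : Set ι).PairwiseDisjoint fun v ↦ ⋂ w ∈ S, Y w ⁻¹' {decide (w = v)} := by
  intro v hv v' _ hne
  refine Set.disjoint_left.2 fun ω h h' ↦ hne ?_
  simp only [Set.mem_iInter, Set.mem_preimage, Set.mem_singleton_iff] at h h'
  simpa [h v hv] using h' v hv

variable [MeasurableSpace Ω]

lemma measurableSet_isolationEvent {Y : ι → Ω → Bool} (hm : ∀ v, Measurable (Y v))
    (S : Finset ι) : MeasurableSet (isolationEvent Y S) := by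
  classical
  rw [isolationEvent_eq_biUnion]
  exact S.measurableSet_biUnion fun v _ ↦ S.measurableSet_biInter fun w _ ↦
    hm w (measurableSet_singleton _)

variable {μ : Measure Ω} [IsProbabilityMeasure μ]

lemma measureReal_biInter_preimage_decide_eq [DecidableEq ι] {Y : ι → Ω → Bool}
    (hm : ∀ v, Measurable (Y v)) (hY : iIndepFun Y μ) {S : Finset ι} {v : ι} (hv : v ∈ S) :
    μ.real (⋂ w ∈ S, Y w ⁻¹' {decide (w = v)}) =
      μ.real {ω | Y v ω = true} * ∏ w ∈ S.erase v, (1 - μ.real {ω | Y w ω = true}) := by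
  rw [measureReal_def, hY.measure_inter_preimage_eq_mul S fun w _ ↦ measurableSet_singleton _,
    ENNReal.toReal_prod, ← Finset.mul_prod_erase S _ hv]
  congr 1
  · simp [measureReal_def, Set.preimage]
  · refine Finset.prod_congr rfl fun w hw ↦ ?_
    have hcompl : Y w ⁻¹' {decide (w = v)} = {ω | Y w ω = true}ᶜ := by
      ext ω
      simp [Finset.ne_of_mem_erase hw]
    rw [hcompl, ← measureReal_def,
      probReal_compl_eq_one_sub (measurableSet_eq_fun (hm w) measurable_const)]

lemma measureReal_isolationEvent [DecidableEq ι] {Y : ι → Ω → Bool}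
    (hm : ∀ v, Measurable (Y v)) (hY : iIndepFun Y μ) (S : Finset ι) :
    μ.real (isolationEvent Y S) = ∑ v ∈ S,
      μ.real {ω | Y v ω = true} * ∏ w ∈ S.erase v, (1 - μ.real {ω | Y w ω = true}) := by
  rw [isolationEvent_eq_biUnion,
    measureReal_biUnion_finset (pairwiseDisjoint_biInter_preimage_decide_eq Y S) fun v _ ↦
      S.measurableSet_biInter fun w _ ↦ hm w (measurableSet_singleton _)]
  exact Finset.sum_congr rfl fun v hv ↦ measureReal_biInter_preimage_decide_eq hm hY hv

lemma measureReal_isolationEvent_of_forall_eq {Y : ι → Ω → Bool} (hm : ∀ v, Measurable (Y v))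
    (hY : iIndepFun Y μ) {S : Finset ι} {p : ℝ} (hp : ∀ v ∈ S, μ.real {ω | Y v ω = true} = p) :
    μ.real (isolationEvent Y S) = S.card * (p * (1 - p) ^ (S.card - 1)) := by
  classical
  rw [measureReal_isolationEvent hm hY, ← nsmul_eq_mul]
  refine Finset.sum_eq_card_nsmul fun v hv ↦ ?_
  rw [hp v hv, ← Finset.card_erase_of_mem hv]
  exact congrArg (p * ·) (Finset.prod_eq_pow_card fun w hw ↦
    by rw [hp w (Finset.mem_of_mem_erase hw)])

end Isolation

section DyadicProbability

lemma exp_neg_one_le_one_sub_inv_pow (m : ℕ) :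
    Real.exp (-1) ≤ (1 - ((m + 1 : ℕ) : ℝ)⁻¹) ^ m := by
  rcases eq_or_ne m 0 with rfl | hm
  · simp
  · have hinv : 1 - ((m + 1 : ℕ) : ℝ)⁻¹ = (1 + (m : ℝ)⁻¹)⁻¹ := by
      push_cast
      field_simp
      ring
    rw [hinv, inv_pow, Real.exp_neg]
    exact inv_anti₀ (by positivity) Real.one_add_inv_pow_le_exp

lemma exp_neg_two_le_one_sub_inv_pow {m k : ℕ} (hk : k ≤ 2 * m) :
    Real.exp (-2) ≤ (1 - ((m + 1 : ℕ) : ℝ)⁻¹) ^ k := by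
  have hinv : ((m + 1 : ℕ) : ℝ)⁻¹ ≤ 1 := Nat.cast_inv_le_one _
  calc Real.exp (-2) = Real.exp (-1) ^ 2 := by
        rw [← Real.exp_nat_mul]
        norm_num
    _ ≤ ((1 - ((m + 1 : ℕ) : ℝ)⁻¹) ^ m) ^ 2 := by
        gcongr
        exact exp_neg_one_le_one_sub_inv_pow m
    _ = (1 - ((m + 1 : ℕ) : ℝ)⁻¹) ^ (2 * m) := by rw [← pow_mul, mul_comm]
    _ ≤ _ := pow_le_pow_of_le_one (sub_nonneg.2 hinv) (sub_le_self _ (by positivity)) hk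

lemma exp_neg_two_le_mul_pow_log {d : ℕ} (hd : d ≠ 0) :
    Real.exp (-2) ≤ d * ((2 : ℝ)⁻¹ ^ Nat.log 2 d * (1 - (2 : ℝ)⁻¹ ^ Nat.log 2 d) ^ (d - 1)) := by
  obtain ⟨m, hm⟩ := Nat.exists_eq_add_one.2 (Nat.two_pow_pos (Nat.log 2 d))
  have hle : m + 1 ≤ d := hm ▸ Nat.pow_log_le_self 2 hd
  have hlt : d < (m + 1) * 2 := by
    rw [← hm, ← pow_succ]
    exact Nat.lt_pow_succ_log_self one_lt_two d
  have hp : (2 : ℝ)⁻¹ ^ Nat.log 2 d = ((m + 1 : ℕ) : ℝ)⁻¹ := by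
    rw [← hm, inv_pow]
    push_cast
    rfl
  have hexpect : 1 ≤ d * ((m + 1 : ℕ) : ℝ)⁻¹ := by
    rw [← div_eq_mul_inv, one_le_div (by positivity)]
    exact_mod_cast hle
  rw [hp, ← mul_assoc]
  exact (exp_neg_two_le_one_sub_inv_pow (by omega)).trans
    (le_mul_of_one_le_left ((Real.exp_nonneg _).trans (exp_neg_two_le_one_sub_inv_pow (by omega)))
      hexpect)

end DyadicProbability

section IndependentRounds

variable {ι Ω : Type*} [MeasurableSpace Ω] {μ : Measure Ω} [IsProbabilityMeasure μ]

lemma iIndepFun_curry {κ : ι → Type*} {𝓧 : (i : ι) → κ i → Type*}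
    [∀ i j, MeasurableSpace (𝓧 i j)] {X : (i : ι) → (j : κ i) → Ω → 𝓧 i j}
    (hm : ∀ i j, Measurable (X i j))
    (hX : iIndepFun (fun (p : (i : ι) × κ i) ω ↦ X p.1 p.2 ω) μ) :
    iIndepFun (fun i ω j ↦ X i j ω) μ := by
  have : ∀ i j, IsProbabilityMeasure (μ.map (X i j)) := fun i j ↦
    Measure.isProbabilityMeasure_map (hm i j).aemeasurable
  have hrow : ∀ i, μ.map (fun ω j ↦ X i j ω) = Measure.infinitePi fun j ↦ μ.map (X i j) :=
    fun i ↦ (hX.precomp sigma_mk_injective).map_fun_eq_infinitePi_map (hm i)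
  have hcurry : (fun ω i j ↦ X i j ω) =
      MeasurableEquiv.piCurry 𝓧 ∘ fun ω (p : (i : ι) × κ i) ↦ X p.1 p.2 ω := rfl
  rw [iIndepFun_iff_map_fun_eq_infinitePi_map (by fun_prop), hcurry,
    ← Measure.map_map (by fun_prop) (by fun_prop), hX.map_fun_eq_infinitePi_map (by fun_prop)]
  simp_rw [hrow]
  exact Measure.infinitePi_map_piCurry fun i j ↦ μ.map (X i j)

lemma iIndepSet_isolationEvent {κ : Type*} {Y : κ → ι → Ω → Bool}
    (hm : ∀ j v, Measurable (Y j v))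
    (hY : iIndepFun (fun (p : (_ : κ) × ι) ω ↦ Y p.1 p.2 ω) μ) (S : κ → Finset ι) :
    iIndepSet (fun j ↦ isolationEvent (Y j) (S j)) μ := by
  rw [iIndepSet_iff_meas_biInter fun j ↦ measurableSet_isolationEvent (hm j) (S j)]
  intro J
  exact (iIndepFun_curry hm hY).measure_inter_preimage_eq_mul J
    (sets := fun j ↦ isolationEvent (fun v y ↦ y v) (S j))
    fun j _ ↦ measurableSet_isolationEvent measurable_pi_apply (S j)

lemma measureReal_iInter_compl_le_exp_of_iIndepSet [Fintype ι] {B : ι → Set Ω}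
    (hB : ∀ i, MeasurableSet (B i)) (hindep : iIndepSet B μ) {q : ℝ}
    (hq : ∀ i, q ≤ μ.real (B i)) :
    μ.real (⋂ i, (B i)ᶜ) ≤ Real.exp (-(q * Fintype.card ι)) := by
  have hprod : μ.real (⋂ i, (B i)ᶜ) = ∏ i, μ.real (B i)ᶜ := by
    rw [measureReal_def, ((iIndepSet_iff_iIndep B μ).1 hindep).meas_iInter fun i ↦
      (MeasurableSpace.measurableSet_generateFrom (Set.mem_singleton (B i))).compl,
      ENNReal.toReal_prod]
    rfl
  calc μ.real (⋂ i, (B i)ᶜ) = ∏ i, μ.real (B i)ᶜ := hprod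
    _ ≤ ∏ _i : ι, Real.exp (-q) := by
        refine Finset.prod_le_prod (fun _ _ ↦ measureReal_nonneg) fun i _ ↦ ?_
        rw [probReal_compl_eq_one_sub (hB i)]
        exact (sub_le_sub_left (hq i) 1).trans (Real.one_sub_le_exp_neg q)
    _ = Real.exp (-(q * Fintype.card ι)) := by
        rw [Finset.prod_const, Finset.card_univ, ← Real.exp_nat_mul]
        ring_nf

end IndependentRounds

section Hypergraph

variable {V Ω : Type*} [MeasurableSpace Ω] {μ : Measure Ω} [IsProbabilityMeasure μ]
  {L T : ℕ} {X : V × Fin L × Fin T → Ω → Bool}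

lemma measureReal_iInter_compl_isolationEvent_le (hm : ∀ q, Measurable (X q))
    (hX : iIndepFun X μ) (hp : ∀ v i j, μ.real {ω | X (v, i, j) ω = true} = 2⁻¹ ^ (i : ℕ))
    {S : Finset V} (hS : S.Nonempty) (hL : Nat.log 2 S.card < L) :
    μ.real (⋂ (i) (j), (isolationEvent (fun v ↦ X (v, i, j)) S)ᶜ) ≤
      Real.exp (-(Real.exp (-2) * T)) := by
  let i : Fin L := ⟨Nat.log 2 S.card, hL⟩
  have hindep : iIndepSet (fun j ↦ isolationEvent (fun v ↦ X (v, i, j)) S) μ :=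
    iIndepSet_isolationEvent (Y := fun j v ↦ X (v, i, j)) (fun j v ↦ hm _)
      (hX.precomp (g := fun p : (_ : Fin T) × V ↦ (p.2, i, p.1)) (by
        rintro ⟨j, v⟩ ⟨j', v'⟩ h
        simp_all)) fun _ ↦ S
  have hround (j : Fin T) :
      Real.exp (-2) ≤ μ.real (isolationEvent (fun v ↦ X (v, i, j)) S) := by
    rw [measureReal_isolationEvent_of_forall_eq (fun v ↦ hm _)
      (hX.precomp (Prod.mk_left_injective (i, j))) fun v _ ↦ hp v i j]
    exact exp_neg_two_le_mul_pow_log hS.card_ne_zero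
  calc μ.real (⋂ (i) (j), (isolationEvent (fun v ↦ X (v, i, j)) S)ᶜ)
      ≤ μ.real (⋂ j, (isolationEvent (fun v ↦ X (v, i, j)) S)ᶜ) :=
        measureReal_mono (Set.iInter_subset _ i)
    _ ≤ Real.exp (-(Real.exp (-2) * T)) := by
        simpa using measureReal_iInter_compl_le_exp_of_iIndepSet
          (fun j ↦ measurableSet_isolationEvent (fun v ↦ hm _) S) hindep hround

lemma one_sub_card_mul_exp_le_measureReal_forall_isolationEvent {β : Type*} {I : Finset β}
    {e : β → Finset V} (hm : ∀ q, Measurable (X q)) (hX : iIndepFun X μ)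
    (hp : ∀ v i j, μ.real {ω | X (v, i, j) ω = true} = 2⁻¹ ^ (i : ℕ))
    (hne : ∀ ℓ ∈ I, (e ℓ).Nonempty) (hL : ∀ ℓ ∈ I, Nat.log 2 (e ℓ).card < L) :
    1 - I.card * Real.exp (-(Real.exp (-2) * T)) ≤
      μ.real {ω | ∀ ℓ ∈ I, ∃ i j, ω ∈ isolationEvent (fun v ↦ X (v, i, j)) (e ℓ)} := by
  set G := {ω | ∀ ℓ ∈ I, ∃ i j, ω ∈ isolationEvent (fun v ↦ X (v, i, j)) (e ℓ)}
  have hcompl : Gᶜ = ⋃ ℓ ∈ I, ⋂ (i) (j), (isolationEvent (fun v ↦ X (v, i, j)) (e ℓ))ᶜ := by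
    ext ω
    simp [G]
  have hbad : μ.real Gᶜ ≤ I.card * Real.exp (-(Real.exp (-2) * T)) := by
    rw [hcompl, ← nsmul_eq_mul]
    exact (measureReal_biUnion_finset_le I _).trans (Finset.sum_le_card_nsmul _ _ _ fun ℓ hℓ ↦
      measureReal_iInter_compl_isolationEvent_le hm hX hp (hne ℓ hℓ) (hL ℓ hℓ))
  have htotal : 1 ≤ μ.real G + μ.real Gᶜ := by
    simpa using measureReal_union_le (μ := μ) G Gᶜ
  linarith

end Hypergraph

lemma mul_exp_le_rpow_neg {x t c : ℝ} (hx : 0 < x)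
    (ht : Real.exp 2 * (c + 1) * Real.log x ≤ t) :
    x * Real.exp (-(Real.exp (-2) * t)) ≤ x ^ (-c) := by
  have hlog : (c + 1) * Real.log x ≤ Real.exp (-2) * t := by
    rwa [Real.exp_neg, ← div_eq_inv_mul, le_div_iff₀' (Real.exp_pos 2), ← mul_assoc]
  calc x * Real.exp (-(Real.exp (-2) * t))
      = Real.exp (Real.log x - Real.exp (-2) * t) := by
        rw [sub_eq_add_neg, Real.exp_add, Real.exp_log hx]
    _ ≤ Real.exp (Real.log x * -c) := Real.exp_le_exp.2 (by linarith)
    _ = x ^ (-c) := (Real.rpow_def_of_pos hx _).symm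

lemma mem_isolationEvent_subtype {α Ω : Type*} {p : α → Prop} [DecidablePred p]
    {Y : Subtype p → Ω → Bool} {S : Finset α} {ω : Ω} :
    ω ∈ isolationEvent Y (S.subtype p) ↔ ∃! v, ∃ hv : p v, v ∈ S ∧ Y ⟨v, hv⟩ ω = true := by
  simp only [isolationEvent, Set.mem_ofPred_eq, Finset.mem_subtype]
  constructor
  · rintro ⟨v, hv, huniq⟩
    exact ⟨v, ⟨v.2, hv⟩, fun w ⟨hpw, hw⟩ ↦ congrArg Subtype.val (huniq ⟨w, hpw⟩ hw)⟩
  · rintro ⟨v, ⟨hpv, hv⟩, huniq⟩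
    exact ⟨⟨v, hpv⟩, hv, fun w hw ↦ Subtype.ext (huniq w ⟨w.2, hw⟩)⟩

theorem abstract_hbd_succeeds_whp_general (c : ℝ) (hc : 0 < c) :
    ∃ C : ℝ, 0 < C ∧ ∀ n : ℕ, n ≠ 0 →
      ∀ (α β : Type*) (Vset : Set α) (I : Finset β) (e : β → Finset α),
        (∀ i ∈ I, (e i : Set α) ⊆ Vset) → (∀ i ∈ I, (e i).Nonempty) →
        (∀ i ∈ I, (e i).card ≤ n) → I.card ≤ n →
        ∀ (Ω : Type*) (_ : MeasurableSpace Ω) (μ : Measure Ω),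
          IsProbabilityMeasure μ →
          ∀ (X : {x // x ∈ Vset} × Fin (Nat.log 2 n + 1) ×
                Fin ⌈C * Real.logb 2 n⌉₊ → Ω → Bool),
            (∀ q, Measurable (X q)) →
            iIndepFun X μ →
            (∀ u i j, μ {ω | X (u, i, j) ω = true} =
              ENNReal.ofReal ((2 : ℝ)⁻¹ ^ (i : ℕ))) →
            ENNReal.ofReal (1 - (n : ℝ) ^ (-c)) ≤
              μ {ω | ∀ ℓ ∈ I,
                ∃ (i : Fin (Nat.log 2 n + 1)) (j : Fin ⌈C * Real.logb 2 n⌉₊),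
                  ∃! v : α, ∃ hv : v ∈ Vset,
                    v ∈ e ℓ ∧ X (⟨v, hv⟩, i, j) ω = true} := by
  classical
  refine ⟨Real.exp 2 * (c + 1) * Real.log 2, by positivity, ?_⟩
  intro n hn α β Vset I e hsub hne hrank hI Ω _ μ _
  generalize hTn : ⌈Real.exp 2 * (c + 1) * Real.log 2 * Real.logb 2 n⌉₊ = T
  intro X hm hX hp
  have hT : Real.exp 2 * (c + 1) * Real.log n ≤ T := by
    rw [← hTn, mul_assoc _ (Real.log 2), Real.logb, mul_div_cancel₀ _ (Real.log_pos one_lt_two).ne']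
    exact Nat.le_ceil _
  have hpReal (u i j) : μ.real {ω | X (u, i, j) ω = true} = 2⁻¹ ^ (i : ℕ) := by
    rw [measureReal_def, hp, ENNReal.toReal_ofReal (by positivity)]
  have hneSub : ∀ ℓ ∈ I, ((e ℓ).subtype (· ∈ Vset)).Nonempty := fun ℓ hℓ ↦
    (hne ℓ hℓ).elim fun v hv ↦ ⟨⟨v, hsub ℓ hℓ hv⟩, Finset.mem_subtype.2 hv⟩
  have hlog : ∀ ℓ ∈ I, Nat.log 2 ((e ℓ).subtype (· ∈ Vset)).card < Nat.log 2 n + 1 :=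
    fun ℓ hℓ ↦ Nat.lt_succ_of_le (Nat.log_mono_right
      ((Finset.card_subtype _ _).trans_le (Finset.card_filter_le _ _) |>.trans (hrank ℓ hℓ)))
  rw [ENNReal.ofReal_le_iff_le_toReal (measure_ne_top _ _), ← measureReal_def]
  calc 1 - (n : ℝ) ^ (-c) ≤ 1 - n * Real.exp (-(Real.exp (-2) * T)) := by
        gcongr
        exact mul_exp_le_rpow_neg (by positivity) hT
    _ ≤ 1 - I.card * Real.exp (-(Real.exp (-2) * T)) := by gcongr
    _ ≤ _ := one_sub_card_mul_exp_le_measureReal_forall_isolationEvent hm hX hpReal hneSub hlog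
    _ ≤ _ := by
        refine measureReal_mono fun ω hω ℓ hℓ ↦ ?_
        obtain ⟨i, j, hij⟩ := hω ℓ hℓ
        exact ⟨i, j, mem_isolationEvent_subtype.1 hij⟩

/-- Lemma 4.1, probabilistic form: for every `c > 0` there is a constant `C` such that
for every hypergraph of combinatorial size at most `n`, running the abstract HBD
procedure with `⌊log₂ n⌋ + 1` epochs of `T = ⌈C · log₂ n⌉` iterations each —
i.e., with mutually independent Bernoulli variables `X (u, i, j)` of success
probability `2^{-i}` — with probability at least `1 - n^{-c}` every hyperedge `e ℓ`
has some pair `(i, j)` for which exactly one of its vertices `u` satisfies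
`X (u, i, j) = 1` (whence the first such pair, used as the color of `e ℓ`, together
with the color sets `cs u = {(i,j) : X (u,i,j) = 1}`, forms a feasible HBD solution
with palette size `(⌊log₂ n⌋ + 1) · T = O(log² n)`). -/
theorem abstract_hbd_succeeds_whp (c : ℝ) (hc : 0 < c) :
    ∃ C : ℝ, 0 < C ∧ ∀ n : ℕ, 2 ≤ n →
      ∀ (α β : Type) [DecidableEq α] (Vset : Finset α) (I : Finset β)
        (e : β → Finset α),
        (∀ i ∈ I, e i ⊆ Vset) → (∀ i ∈ I, (e i).Nonempty) →
        Vset.card + I.card ≤ n →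
        ∀ (Ω : Type) (_ : MeasurableSpace Ω) (μ : Measure Ω),
          IsProbabilityMeasure μ →
          ∀ (X : {x // x ∈ Vset} × Fin (Nat.log 2 n + 1) ×
                Fin ⌈C * Real.logb 2 n⌉₊ → Ω → Bool),
            (∀ q, Measurable (X q)) →
            iIndepFun X μ →
            (∀ u i j, μ {ω | X (u, i, j) ω = true} =
              ENNReal.ofReal ((2 : ℝ)⁻¹ ^ (i : ℕ))) →
            ENNReal.ofReal (1 - (n : ℝ) ^ (-c)) ≤
              μ {ω | ∀ ℓ ∈ I,
                ∃ (i : Fin (Nat.log 2 n + 1)) (j : Fin ⌈C * Real.logb 2 n⌉₊),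
                  ∃! v : α, ∃ hv : v ∈ Vset,
                    v ∈ e ℓ ∧ X (⟨v, hv⟩, i, j) ω = true} := by
  obtain ⟨C, hC, h⟩ := abstract_hbd_succeeds_whp_general c hc
  exact ⟨C, hC, fun n hn α β _ Vset I e hsub hne hcard ↦ h n (by omega) α β Vset I e hsub hne
    (fun i hi ↦ (Finset.card_le_card (hsub i hi)).trans (by omega)) (by omega)⟩
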